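/- Fix a real α > 0 and θ ∈ (0, π). Define the complex-valued function G_θ of a real variable φ ∈ (0, π) by G_θ(φ) := [e^{i(π+φ)} · Θ_{1/α}(φ)^α · (e^{i(π−φ)/(1+α)} − Θ_{1/α}(φ))] / [Θ_{1/α}(φ)^α · e^{−i(π−φ)/(1+1/α)} − Θ_{1/α}(θ)^α · Θ_α(θ)] (the denominator is nonzero since its imaginary part −Θ_{1/α}(φ)^α·sin((π−φ)/(1+1/α)) is nonzero). Then G_θ is differentiable on (0, π), and for φ ∈ (0, π) the derivative G_θ′(φ) equals 0 if and only if φ = θ. (Equivalently, the saddle-point equation f_θ′(φ) = 0 for f_θ(φ) = log G_θ(φ) has the unique solution φ = θ in (0, π).) -/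

import Mathlib

open Real Filter Set Topology

/-- `Th α t = sin t / ((1+α)·sin((π−t)/(1+α)))`; `Th (1/α)` is `Θ_{1/α}`. -/
noncomputable def Th (α t : ℝ) : ℝ :=
  Real.sin t / ((1 + α) * Real.sin ((Real.pi - t) / (1 + α)))

/-- `G α θ φ = e^{i(π+φ)}·Θ_{1/α}(φ)^α·(e^{i(π−φ)/(1+α)} − Θ_{1/α}(φ)) /
    (Θ_{1/α}(φ)^α·e^{−i(π−φ)/(1+1/α)} − Θ_{1/α}(θ)^α·Θ_α(θ))`. -/
noncomputable def G (α θ φ : ℝ) : ℂ :=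
  (Complex.exp (Complex.I * ((Real.pi + φ : ℝ) : ℂ)) * (((Th (1/α) φ) ^ α : ℝ) : ℂ) *
    (Complex.exp (Complex.I * (((Real.pi - φ) / (1 + α) : ℝ) : ℂ)) - ((Th (1/α) φ : ℝ) : ℂ))) /
  ((((Th (1/α) φ) ^ α : ℝ) : ℂ) *
      Complex.exp (-Complex.I * (((Real.pi - φ) / (1 + 1/α) : ℝ) : ℂ)) -
    (((Th (1/α) θ) ^ α * Th α θ : ℝ) : ℂ))

/-- `sin x / sin (c x)` has strictly decreasing behaviour: numerator of its derivative. -/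
lemma num_neg (c : ℝ) (hc : 0 < c) (hc1 : c < 1) (x : ℝ) (hx : x ∈ Set.Ioo 0 Real.pi) :
    Real.cos x * Real.sin (c * x) - Real.sin x * (c * Real.cos (c * x)) < 0 := by
  have hd : ∀ y : ℝ, HasDerivAt
      (fun y => Real.cos y * Real.sin (c * y) - Real.sin y * (c * Real.cos (c * y)))
      (-(1 - c ^ 2) * (Real.sin y * Real.sin (c * y))) y := by
    intro y
    have h1 : HasDerivAt (fun y : ℝ => c * y) c y := by
      simpa using (hasDerivAt_id y).const_mul c
    have h2 := ((Real.hasDerivAt_cos y).mul h1.sin).sub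
      ((Real.hasDerivAt_sin y).mul (h1.cos.const_mul c))
    refine h2.congr_deriv ?_
    ring
  have hanti : StrictAntiOn
      (fun y => Real.cos y * Real.sin (c * y) - Real.sin y * (c * Real.cos (c * y)))
      (Set.Icc 0 x) := by
    apply strictAntiOn_of_deriv_neg (convex_Icc 0 x)
    · exact fun y _ => (hd y).continuousAt.continuousWithinAt
    · intro y hy
      rw [interior_Icc] at hy
      rw [(hd y).deriv]
      have hs1 : 0 < Real.sin y := Real.sin_pos_of_pos_of_lt_pi hy.1 (hy.2.trans hx.2)
      have hs2 : 0 < Real.sin (c * y) := by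
        apply Real.sin_pos_of_pos_of_lt_pi (mul_pos hc hy.1)
        have : c * y < 1 * y := mul_lt_mul_of_pos_right hc1 hy.1
        linarith [hy.2, hx.2]
      have : 0 < 1 - c ^ 2 := by nlinarith
      have := mul_pos this (mul_pos hs1 hs2)
      linarith
  have := hanti (Set.left_mem_Icc.2 hx.1.le) (Set.right_mem_Icc.2 hx.1.le) hx.1
  simpa using this

lemma arg_mem (α : ℝ) (hα : 0 < α) (t : ℝ) (ht : t ∈ Set.Ioo 0 Real.pi) :
    0 < Real.sin ((Real.pi - t) / (1 + α)) := by
  have h1 : 0 < Real.pi - t := by linarith [ht.2]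
  apply Real.sin_pos_of_pos_of_lt_pi
  · positivity
  · rw [div_lt_iff₀ (by linarith)]
    nlinarith [ht.1, Real.pi_pos]

lemma Th_pos (α : ℝ) (hα : 0 < α) (t : ℝ) (ht : t ∈ Set.Ioo 0 Real.pi) : 0 < Th α t := by
  unfold Th
  have := arg_mem α hα t ht
  have := Real.sin_pos_of_pos_of_lt_pi ht.1 ht.2
  positivity

lemma Th_hasDeriv (α : ℝ) (hα : 0 < α) (t : ℝ) (ht : t ∈ Set.Ioo 0 Real.pi) :
    ∃ d, HasDerivAt (Th α) d t ∧ 0 < d := by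
  have hs := arg_mem α hα t ht
  have h1 : HasDerivAt (fun t : ℝ => (Real.pi - t) / (1 + α)) (-1 / (1 + α)) t := by
    simpa using ((hasDerivAt_id t).const_sub Real.pi).div_const (1 + α)
  have h2 := (Real.hasDerivAt_sin t).div (h1.sin.const_mul (1 + α)) (by positivity)
  refine ⟨_, h2, ?_⟩
  apply div_pos _ (by positivity)
  have hα1 : (0 : ℝ) < 1 + α := by linarith
  have hn := num_neg (1 / (1 + α)) (by positivity)
    (by rw [div_lt_one hα1]; linarith) (Real.pi - t) ⟨by linarith [ht.2], by linarith [ht.1]⟩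
  rw [Real.cos_pi_sub, Real.sin_pi_sub] at hn
  have e : 1 / (1 + α) * (Real.pi - t) = (Real.pi - t) / (1 + α) := by ring
  rw [e] at hn
  have := mul_neg_of_pos_of_neg hα1 hn
  have e2 : Real.cos t * ((1 + α) * Real.sin ((Real.pi - t) / (1 + α))) -
      Real.sin t * ((1 + α) * (Real.cos ((Real.pi - t) / (1 + α)) * (-1 / (1 + α)))) =
      -((1 + α) * (-Real.cos t * Real.sin ((Real.pi - t) / (1 + α)) -
      Real.sin t * (1 / (1 + α) * Real.cos ((Real.pi - t) / (1 + α))))) := by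
    ring
  rw [e2]
  linarith

lemma Th_mono (α : ℝ) (hα : 0 < α) : StrictMonoOn (Th α) (Set.Ioo 0 Real.pi) := by
  apply strictMonoOn_of_deriv_pos (convex_Ioo 0 Real.pi)
  · intro t ht
    obtain ⟨d, hd, _⟩ := Th_hasDeriv α hα t ht
    exact hd.continuousAt.continuousWithinAt
  · intro t ht
    rw [interior_Ioo] at ht
    obtain ⟨d, hd, hp⟩ := Th_hasDeriv α hα t ht
    rwa [hd.deriv]

lemma H_mono (α : ℝ) (hα : 0 < α) :
    StrictMonoOn (fun t => Th (1 / α) t ^ α * Th α t) (Set.Ioo 0 Real.pi) := by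
  intro s hs t ht hst
  have hα' : 0 < 1 / α := by positivity
  have h1 := Th_mono α hα hs ht hst
  have h2 := Th_mono (1 / α) hα' hs ht hst
  have h3 := Real.rpow_lt_rpow (Th_pos _ hα' s hs).le h2 hα
  have h4 := Th_pos α hα s hs
  exact mul_lt_mul h3 h1.le h4 (Real.rpow_nonneg (Th_pos _ hα' t ht).le _)

/-- Rewriting `G` with `z = T e^{-ip}`, `u = T^α e^{-iq}`. -/
lemma G_eq (α θ : ℝ) (hα : 0 < α) : G α θ = fun φ =>
    ((((Th (1/α) φ) ^ α : ℝ) : ℂ) *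
      Complex.exp (-Complex.I * (((Real.pi - φ) / (1 + 1/α) : ℝ) : ℂ)) *
    (1 - ((Th (1/α) φ : ℝ) : ℂ) *
      Complex.exp (-Complex.I * (((Real.pi - φ) / (1 + α) : ℝ) : ℂ)))) /
  ((((Th (1/α) φ) ^ α : ℝ) : ℂ) *
      Complex.exp (-Complex.I * (((Real.pi - φ) / (1 + 1/α) : ℝ) : ℂ)) -
    (((Th (1/α) θ) ^ α * Th α θ : ℝ) : ℂ)) := by
  funext φ
  unfold G
  congr 1
  set p := (Real.pi - φ) / (1 + α) with hp
  set q := (Real.pi - φ) / (1 + 1/α) with hq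
  have hpq : Real.pi + φ = 2 * Real.pi - p - q := by
    rw [hp, hq]; field_simp; ring
  have e1 : Complex.exp (Complex.I * ((Real.pi + φ : ℝ) : ℂ)) =
      Complex.exp (-Complex.I * (p : ℂ)) * Complex.exp (-Complex.I * (q : ℂ)) := by
    rw [hpq, ← Complex.exp_add]
    have : Complex.I * ((2 * Real.pi - p - q : ℝ) : ℂ) =
      (-Complex.I * (p : ℂ) + -Complex.I * (q : ℂ)) + 2 * Real.pi * Complex.I := by
      push_cast; ring
    rw [this, Complex.exp_add, Complex.exp_two_pi_mul_I, mul_one]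
  have e2 : Complex.exp (-Complex.I * (p : ℂ)) * Complex.exp (Complex.I * (p : ℂ)) = 1 := by
    rw [← Complex.exp_add]; simp
  rw [e1]
  linear_combination (Complex.exp (-Complex.I * (q : ℂ)) * (((Th (1/α) φ) ^ α : ℝ) : ℂ)) * e2

lemma exp_negI (p : ℝ) : Complex.exp (-Complex.I * (p : ℂ)) =
    (Real.cos p : ℂ) - Complex.I * (Real.sin p : ℂ) := by
  have : -Complex.I * (p : ℂ) = ((-p : ℝ) : ℂ) * Complex.I := by push_cast; ring
  rw [this, Complex.exp_mul_I, ← Complex.ofReal_cos, ← Complex.ofReal_sin, Real.cos_neg,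
    Real.sin_neg]
  push_cast; ring

lemma key_id (p q : ℝ) : ((Real.sin (p + q) : ℝ) : ℂ) * Complex.exp (-Complex.I * (p : ℂ)) -
    (Real.sin q : ℂ) = (Real.sin p : ℂ) * Complex.exp (-Complex.I * (p : ℂ)) *
      Complex.exp (-Complex.I * (q : ℂ)) := by
  rw [exp_negI, exp_negI, Real.sin_add]
  have h : ((Real.sin p : ℝ) : ℂ) ^ 2 + ((Real.cos p : ℝ) : ℂ) ^ 2 = 1 := by
    exact_mod_cast Real.sin_sq_add_cos_sq p
  push_cast at h ⊢
  linear_combination (Complex.sin q) * h -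
    (Complex.sin p ^ 2 * Complex.sin q) * Complex.I_sq

lemma G_deriv (α θ : ℝ) (hα : 0 < α) (φ : ℝ) (hφ : φ ∈ Set.Ioo 0 Real.pi) :
    ∃ c : ℂ, c ≠ 0 ∧ HasDerivAt (G α θ)
      (c * (((Th (1/α) θ ^ α * Th α θ - Th (1/α) φ ^ α * Th α φ : ℝ)) : ℂ)) φ := by
  have hα' : 0 < 1 / α := by positivity
  have hα1 : 0 < 1 + α := by positivity
  rw [G_eq α θ hα]
  obtain ⟨d, hd, -⟩ := Th_hasDeriv (1/α) hα' φ hφ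
  have hT := Th_pos (1/α) hα' φ hφ
  have hsp := arg_mem α hα φ hφ
  have hsq := arg_mem (1/α) hα' φ hφ
  have hA := hd.rpow_const (p := α) (Or.inl hT.ne')
  have hp1 : HasDerivAt (fun t : ℝ => (Real.pi - t) / (1 + α)) (-1 / (1 + α)) φ := by
    simpa using ((hasDerivAt_id φ).const_sub Real.pi).div_const (1 + α)
  have hq1 : HasDerivAt (fun t : ℝ => (Real.pi - t) / (1 + 1/α)) (-1 / (1 + 1/α)) φ := by
    simpa using ((hasDerivAt_id φ).const_sub Real.pi).div_const (1 + 1/α)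
  have hE := (hp1.ofReal_comp.const_mul (-Complex.I)).cexp
  have hF := (hq1.ofReal_comp.const_mul (-Complex.I)).cexp
  have hz := hd.ofReal_comp.mul hE
  have hu := hA.ofReal_comp.mul hF
  set K : ℝ := Th (1/α) θ ^ α * Th α θ with hK
  have hden : (((Th (1/α) φ) ^ α : ℝ) : ℂ) *
      Complex.exp (-Complex.I * (((Real.pi - φ) / (1 + 1/α) : ℝ) : ℂ)) - (K : ℂ) ≠ 0 := by
    intro h
    have := congrArg Complex.im h
    rw [exp_negI] at this
    have hAp := Real.rpow_pos_of_pos hT α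
    simp only [Complex.sub_im, Complex.mul_im, Complex.ofReal_re, Complex.ofReal_im,
      Complex.sub_re, Complex.mul_re, Complex.I_re, Complex.I_im, Complex.zero_im] at this
    nlinarith [mul_pos hAp hsq]
  have hG := (hu.mul (hz.const_sub 1)).div (hu.sub_const (K : ℂ)) hden
  have hr : Th (1/α) φ ^ (α - 1) = Th (1/α) φ ^ α / Th (1/α) φ := Real.rpow_sub_one hT.ne' α
  have hkey := key_id ((Real.pi - φ) / (1 + α)) ((Real.pi - φ) / (1 + 1/α))
  have hpq : (Real.pi - φ) / (1 + α) + (Real.pi - φ) / (1 + 1/α) = Real.pi - φ := by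
    field_simp
    ring
  rw [hpq, Real.sin_pi_sub] at hkey
  have hT1 : Th (1/α) φ * ((1 + α) * Real.sin ((Real.pi - φ) / (1 + 1/α))) = α * Real.sin φ := by
    unfold Th
    have hs := hsq.ne'
    generalize Real.sin ((Real.pi - φ) / (1 + 1/α)) = s at hs
    have h3 : 1 + 1 / α = (1 + α) / α := by field_simp; ring
    rw [h3]
    field_simp
  have hT2 : Th α φ * ((1 + α) * Real.sin ((Real.pi - φ) / (1 + α))) = Real.sin φ := by
    unfold Th; field_simp
  have hq' : -1 / (1 + 1/α) = α * (-1 / (1 + α)) := by field_simp; ring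
  rw [hq', hr] at hG
  have hAp := Real.rpow_pos_of_pos hT α
  simp only [Pi.mul_apply] at hG
  generalize hEE : Complex.exp (-Complex.I * (((Real.pi - φ) / (1 + α) : ℝ) : ℂ)) = E at *
  generalize hFF : Complex.exp (-Complex.I * (((Real.pi - φ) / (1 + 1/α) : ℝ) : ℂ)) = F at *
  have hE0 : E ≠ 0 := hEE ▸ Complex.exp_ne_zero _
  have hF0 : F ≠ 0 := hFF ▸ Complex.exp_ne_zero _
  generalize Th (1/α) φ ^ α = A at *
  generalize Real.sin ((Real.pi - φ) / (1 + α)) = sp at *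
  generalize Real.sin ((Real.pi - φ) / (1 + 1/α)) = sq at *
  generalize hTT : Th (1/α) φ = T at *
  generalize hSS : Th α φ = S at *
  have hl : ((d / T : ℝ) : ℂ) + Complex.I * ((1 / (1 + α) : ℝ) : ℂ) ≠ 0 := by
    intro h
    have := congrArg Complex.im h
    simp only [Complex.add_im, Complex.mul_im, Complex.ofReal_re, Complex.ofReal_im,
      Complex.I_re, Complex.I_im, Complex.zero_im] at this
    have : (0:ℝ) < 1 / (1 + α) := by positivity
    linarith
  have hTc : (T : ℂ) ≠ 0 := by exact_mod_cast hT.ne'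
  have hac : (α : ℂ) ≠ 0 := by exact_mod_cast hα.ne'
  have ha1c : (1 + α : ℂ) ≠ 0 := by exact_mod_cast hα1.ne'
  have hsqc : (sq : ℂ) ≠ 0 := by exact_mod_cast hsq.ne'
  have hspc : (sp : ℂ) ≠ 0 := by exact_mod_cast hsp.ne'
  have hAc : (A : ℂ) ≠ 0 := by exact_mod_cast hAp.ne'
  have hT1c : (T : ℂ) * ((1 + α) * sq) = α * (Real.sin φ : ℂ) := by exact_mod_cast hT1
  have hT2c : (S : ℂ) * ((1 + α) * sp) = (Real.sin φ : ℂ) := by exact_mod_cast hT2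
  generalize ((Real.sin φ : ℝ) : ℂ) = w at *
  -- the main algebraic bracket
  have hbr : -(T * E) * (A * F) - K * (α - (1 + α) * (T * E)) =
      E * F * (α * sp / sq) * (K - A * S) := by
    have h1 : (1 + α) * (T * E) - α = α * sp / sq * (E * F) := by
      field_simp
      linear_combination E * hT1c + α * hkey
    have h2 : (T : ℂ) = α * sp / sq * S := by
      have : (1 + α : ℂ) * (T * sq) = (1 + α) * (α * sp * S) := by
        linear_combination hT1c - α * hT2c
      have := mul_left_cancel₀ ha1c this
      field_simp
      linear_combination this
    linear_combination (K : ℂ) * h1 - E * A * F * h2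
  refine ⟨(((d / T : ℝ) : ℂ) + Complex.I * ((1 / (1 + α) : ℝ) : ℂ)) * (A * F) *
    (E * F * (α * sp / sq)) / (A * F - K) ^ 2, ?_, ?_⟩
  · refine div_ne_zero (mul_ne_zero (mul_ne_zero hl (mul_ne_zero hAc hF0)) ?_) (pow_ne_zero _ hden)
    exact mul_ne_zero (mul_ne_zero hE0 hF0) (div_ne_zero (mul_ne_zero hac hspc) hsqc)
  · refine hG.congr_deriv ?_
    rw [div_mul_eq_mul_div]
    congr 1
    push_cast
    have : ((d / T : ℂ) + Complex.I * (1 / (1 + α))) * (A * F) *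
      (E * F * (α * sp / sq)) * (K - A * S) =
      ((d / T : ℂ) + Complex.I * (1 / (1 + α))) * (A * F) *
      (-(T * E) * (A * F) - K * (α - (1 + α) * (T * E))) := by
      rw [hbr]; ring
    rw [this]
    field_simp
    ring

theorem stmt8 (α θ : ℝ) (hα : 0 < α) (hθ : θ ∈ Set.Ioo 0 Real.pi) :
    (∀ φ ∈ Set.Ioo 0 Real.pi, DifferentiableAt ℝ (G α θ) φ) ∧
    (∀ φ ∈ Set.Ioo 0 Real.pi, (deriv (G α θ) φ = 0 ↔ φ = θ)) := by
  constructor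
  · intro φ hφ
    obtain ⟨c, -, h⟩ := G_deriv α θ hα φ hφ
    exact h.differentiableAt
  · intro φ hφ
    obtain ⟨c, hc, h⟩ := G_deriv α θ hα φ hφ
    rw [h.deriv, mul_eq_zero, or_iff_right hc, Complex.ofReal_eq_zero, sub_eq_zero]
    constructor
    · intro h
      exact ((H_mono α hα).injOn hθ hφ h).symm
    · rintro rfl
      rfl
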